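/- Let ζ = exp(2πi/5). For |q| < 1, (ζq;q)_∞ (ζ^{-1}q;q)_∞ (q;q)_∞ = J_{25,10} + q (ζ² + ζ^{-2}) J_{25,5}, where the J-products are in the variable q. -/

import Mathlib

/-!
By the Jacobi triple product, `j(z;q) = ∑_{n ∈ ℤ} (-1)^n q^{n(n-1)/2} z^n`. For `z = ζ` the left
side of the theorem is `j(ζ;q) / (1 - ζ)`. Splitting the series according to `n = 5m + r` with
`-1 ≤ r ≤ 3`, each residue class contributes `(-ζ)^r q^{r(r-1)/2} j(q^{10+5r};q^25)`
(`thetaTerm_five`). The class `r = 3` vanishes since `j(q^25;q^25) = 0`, the classes `r = 0, 1` give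
`(1 - ζ) J_{25,10}`, and `r = -1, 2` give `q (ζ^2 - ζ^{-1}) J_{25,5}`. Since
`ζ^2 - ζ^{-1} = (1 - ζ)(ζ^2 + ζ^{-2})`, division by `1 - ζ` gives the result.

The triple product (`hasSum_thetaTerm`) is obtained from Cauchy's `q`-binomial theorem
(`cauchy_qBinomial`): recentring it gives a finite triple product (`finite_triple_product`) whose
coefficients are bounded uniformly and tend to `1 / (q;q)_∞`, and dominated convergence for series
applies.
The negative powers of `q` force `q ≠ 0`; at `q = 0` both sides equal `1`.
-/
/-- The q-Pochhammer symbol `(a;q)_∞ = ∏_{k≥0} (1 - a q^k)`. -/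
noncomputable def qPochInf (a q : ℂ) : ℂ := ∏' k : ℕ, (1 - a * q ^ k)

/-- `Jba b a q` is `J_{b,a} = j(q^a;q^b) = (q^a;q^b)_∞ (q^{b-a};q^b)_∞ (q^b;q^b)_∞`. -/
noncomputable def Jba (b a : ℕ) (q : ℂ) : ℂ :=
  qPochInf (q ^ a) (q ^ b) * qPochInf (q ^ (b - a)) (q ^ b) * qPochInf (q ^ b) (q ^ b)

/-- `Jb b q` is `J_b = (q^b;q^b)_∞`. -/
noncomputable def Jb (b : ℕ) (q : ℂ) : ℂ := qPochInf (q ^ b) (q ^ b)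

open Filter Topology

/-! ### The finite triple product -/

/-- The exponent `n(n-1)/2` of the theta series; the division is exact, see `two_mul_triExp`. -/
def triExp (n : ℤ) : ℤ := n * (n - 1) / 2

lemma two_mul_triExp (n : ℤ) : 2 * triExp n = n * (n - 1) :=
  Int.mul_ediv_cancel' (Int.even_mul_pred_self n).two_dvd

lemma triExp_eq_of_two_mul {n m : ℤ} (h : 2 * m = n * (n - 1)) : triExp n = m := by
  have := two_mul_triExp n
  omega

lemma choose_two_succ (k : ℕ) : (k + 1).choose 2 = k + k.choose 2 := by
  rw [Nat.choose_succ_succ' k 1, Nat.choose_one_right]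

lemma two_mul_choose_two (k : ℕ) : 2 * ((k.choose 2 : ℕ) : ℤ) = k * (k - 1) := by
  induction k with
  | zero => simp
  | succ k ih =>
    rw [choose_two_succ]
    push_cast
    linear_combination ih

/-- The `n`-th term `(-z)^n q^{n(n-1)/2}` of the bilateral theta series of `j(z;q)`. -/
noncomputable def thetaTerm (z q : ℂ) (n : ℤ) : ℂ := (-z) ^ n * q ^ triExp n

/-- The finite product `(q;q)_m = ∏_{1 ≤ i ≤ m} (1 - q^i)`. -/
noncomputable def qFac (q : ℂ) (m : ℕ) : ℂ := ∏ i ∈ Finset.range m, (1 - q ^ (i + 1))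

/-- The Gaussian binomial coefficient, defined by the `q`-Pascal rule. -/
noncomputable def gaussBin (q : ℂ) : ℕ → ℕ → ℂ
  | _, 0 => 1
  | 0, _ + 1 => 0
  | n + 1, k + 1 => gaussBin q n k + q ^ (k + 1) * gaussBin q n (k + 1)

lemma gaussBin_zero_right (q : ℂ) (n : ℕ) : gaussBin q n 0 = 1 := by
  cases n <;> simp [gaussBin]

lemma gaussBin_eq_zero (q : ℂ) (n : ℕ) : ∀ k, n < k → gaussBin q n k = 0 := by
  induction n with
  | zero =>
    intro k hk
    obtain ⟨k, rfl⟩ : ∃ j, k = j + 1 := ⟨k - 1, by omega⟩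
    simp [gaussBin]
  | succ n ih =>
    intro k hk
    obtain ⟨k, rfl⟩ : ∃ j, k = j + 1 := ⟨k - 1, by omega⟩
    simp [gaussBin, ih k (by omega), ih (k + 1) (by omega)]

lemma qFac_succ (q : ℂ) (m : ℕ) : qFac q (m + 1) = qFac q m * (1 - q ^ (m + 1)) :=
  Finset.prod_range_succ _ _

/-- The closed form `(q;q)_n / ((q;q)_a (q;q)_{n-a})` of the Gaussian binomial, cleared of
denominators. -/
lemma gaussBin_mul_qFac (q : ℂ) (n : ℕ) :
    ∀ a b, a + b = n → gaussBin q n a * (qFac q a * qFac q b) = qFac q n := by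
  induction n with
  | zero =>
    intro a b h
    obtain ⟨rfl, rfl⟩ : a = 0 ∧ b = 0 := by omega
    simp [gaussBin, qFac]
  | succ n ih =>
    intro a b h
    rcases a with _ | a
    · obtain rfl : b = n + 1 := by omega
      simp [gaussBin, qFac]
    · have h1 := ih a b (by omega)
      rcases b with _ | b
      · obtain rfl : a = n := by omega
        have h2 := gaussBin_eq_zero q a (a + 1) (by omega)
        simp only [gaussBin, h2, qFac_succ]
        linear_combination (1 - q ^ (a + 1)) * h1
      · have h2 := ih (a + 1) b (by omega)
        obtain rfl : n = a + b + 1 := by omega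
        simp only [gaussBin, qFac_succ] at *
        linear_combination (1 - q ^ (a + 1)) * h1 + q ^ (a + 1) * (1 - q ^ (b + 1)) * h2

/-- Cauchy's `q`-binomial theorem. -/
lemma cauchy_qBinomial (q : ℂ) (M : ℕ) : ∀ x : ℂ,
    ∏ k ∈ Finset.range M, (1 + x * q ^ k) =
      ∑ k ∈ Finset.range (M + 1), gaussBin q M k * q ^ (k.choose 2) * x ^ k := by
  induction M with
  | zero => simp [gaussBin]
  | succ M ih =>
    intro x
    have h := ih (x * q)
    rw [Finset.prod_range_succ', Finset.sum_range_succ']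
    have h0 : ∏ k ∈ Finset.range M, (1 + x * q ^ (k + 1)) =
        ∏ k ∈ Finset.range M, (1 + x * q * q ^ k) :=
      Finset.prod_congr rfl fun k _ => by ring
    rw [h0, h]
    simp only [pow_zero, mul_one]
    have h3 : ∑ k ∈ Finset.range (M + 1), gaussBin q M k * q ^ k.choose 2 * (x * q) ^ k =
        ∑ k ∈ Finset.range (M + 1),
          gaussBin q M (k + 1) * q ^ (k + 1).choose 2 * (x * q) ^ (k + 1) + 1 := by
      have h4 := Finset.sum_range_succ'
        (fun k => gaussBin q M k * q ^ k.choose 2 * (x * q) ^ k) (M + 1)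
      rw [Finset.sum_range_succ, gaussBin_eq_zero q M (M + 1) (by omega)] at h4
      simpa [gaussBin_zero_right] using h4
    rw [add_comm 1 x, mul_add, mul_one, Finset.sum_mul]
    rw [h3, ← add_assoc, ← Finset.sum_add_distrib]
    simp only [gaussBin_zero_right, Nat.choose_zero_succ, pow_zero, mul_one, add_left_inj]
    refine Finset.sum_congr rfl fun k _ => ?_
    rw [gaussBin, choose_two_succ]
    ring

/-- Pulling `-q^{k+1}/z` out of each factor turns `(q/z;q)_N` into a product over negative powers
of `q`, the lower half of the product in Cauchy's theorem. -/
lemma prod_inv_eq {q z : ℂ} (hq0 : q ≠ 0) (hz : z ≠ 0) (N : ℕ) :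
    ∏ k ∈ Finset.range N, (1 - q / z * q ^ k) =
      (-z) ^ (-(N : ℤ)) * q ^ ((N + 1).choose 2) *
        ∏ k ∈ Finset.range N, (1 + -z * (q ^ (k + 1))⁻¹) := by
  induction N with
  | zero => simp
  | succ N ih =>
    rw [Finset.prod_range_succ, ih, Finset.prod_range_succ, choose_two_succ (N + 1),
      pow_add]
    have : (-z) ^ (-((N + 1 : ℕ) : ℤ)) = (-z) ^ (-(N : ℤ)) * (-z)⁻¹ := by
      rw [← zpow_sub_one₀ (neg_ne_zero.mpr hz)]
      congr 1
      push_cast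
      ring
    rw [this]
    have h2 : 1 - q / z * q ^ N = (-z)⁻¹ * q ^ (N + 1) * (1 + -z * (q ^ (N + 1))⁻¹) := by
      field_simp
      ring
    rw [h2]
    ring

/-- The finite form of the Jacobi triple product: Cauchy's theorem with `2N` factors, recentred
by the substitution `x = -z q^{-N}`. -/
lemma finite_triple_product {q z : ℂ} (hq0 : q ≠ 0) (hz : z ≠ 0) (N : ℕ) :
    (∏ k ∈ Finset.range N, (1 - z * q ^ k)) * ∏ k ∈ Finset.range N, (1 - q / z * q ^ k) =
      ∑ k ∈ Finset.range (2 * N + 1), gaussBin q (2 * N) k * thetaTerm z q ((k : ℤ) - N) := by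
  have h := cauchy_qBinomial q (2 * N) (-z * (q ^ N)⁻¹)
  rw [two_mul, Finset.prod_range_add, ← two_mul] at h
  have h1 : ∏ k ∈ Finset.range N, (1 + -z * (q ^ N)⁻¹ * q ^ (N + k)) =
      ∏ k ∈ Finset.range N, (1 - z * q ^ k) := by
    refine Finset.prod_congr rfl fun k _ => ?_
    rw [pow_add]
    field_simp
    ring
  have h2 : ∏ k ∈ Finset.range N, (1 + -z * (q ^ N)⁻¹ * q ^ k) =
      ∏ k ∈ Finset.range N, (1 + -z * (q ^ (k + 1))⁻¹) := by
    rw [← Finset.prod_range_reflect]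
    refine Finset.prod_congr rfl fun k hk => ?_
    have hk' := Finset.mem_range.mp hk
    have : q ^ N = q ^ (N - 1 - k) * q ^ (k + 1) := by
      rw [← pow_add]
      congr 1
      omega
    rw [this]
    field_simp
  rw [h1, h2] at h
  rw [prod_inv_eq hq0 hz]
  calc _ = (-z) ^ (-(N : ℤ)) * q ^ ((N + 1).choose 2) *
        ((∏ k ∈ Finset.range N, (1 + -z * (q ^ (k + 1))⁻¹)) *
          ∏ k ∈ Finset.range N, (1 - z * q ^ k)) := by ring
    _ = _ := by
      rw [h, Finset.mul_sum]
      refine Finset.sum_congr rfl fun k _ => ?_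
      have e : triExp ((k : ℤ) - N) =
          (((N + 1).choose 2 : ℕ) : ℤ) + ((k.choose 2 : ℕ) : ℤ) - (N : ℤ) * k := by
        apply triExp_eq_of_two_mul
        have a := two_mul_choose_two (N + 1)
        have b := two_mul_choose_two k
        push_cast at a
        linear_combination a + b
      rw [thetaTerm, e, zpow_sub₀ hq0, zpow_add₀ hq0, zpow_sub₀ (neg_ne_zero.mpr hz), mul_pow,
        zpow_neg, inv_pow, ← pow_mul]
      norm_cast
      ring

/-! ### Passage to the limit -/

lemma summable_norm_qPoch {q : ℂ} (hq : ‖q‖ < 1) (a : ℂ) :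
    Summable fun k : ℕ => ‖-(a * q ^ k)‖ := by
  simp only [norm_neg, norm_mul, norm_pow]
  exact (summable_geometric_of_lt_one (norm_nonneg _) hq).mul_left _

lemma multipliable_qPoch {q : ℂ} (hq : ‖q‖ < 1) (a : ℂ) :
    Multipliable fun k : ℕ => (1 - a * q ^ k) := by
  simpa only [sub_eq_add_neg] using multipliable_one_add_of_summable (summable_norm_qPoch hq a)

lemma tendsto_qPoch {q : ℂ} (hq : ‖q‖ < 1) (a : ℂ) :
    Tendsto (fun N => ∏ k ∈ Finset.range N, (1 - a * q ^ k)) atTop (𝓝 (qPochInf a q)) :=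
  (multipliable_qPoch hq a).tendsto_prod_tprod_nat

lemma tendsto_qFac {q : ℂ} (hq : ‖q‖ < 1) : Tendsto (qFac q) atTop (𝓝 (qPochInf q q)) := by
  convert tendsto_qPoch hq q using 2 with N
  exact Finset.prod_congr rfl fun k _ => by rw [pow_succ']

lemma one_sub_pow_ne_zero {q : ℂ} (hq : ‖q‖ < 1) (k : ℕ) : 1 - q ^ (k + 1) ≠ 0 := by
  intro h
  have h1 : ‖q ^ (k + 1)‖ = 1 := by rw [← sub_eq_zero.mp h, norm_one]
  rw [norm_pow] at h1
  exact (pow_lt_one₀ (norm_nonneg q) hq (Nat.succ_ne_zero k)).ne h1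

lemma qFac_ne_zero {q : ℂ} (hq : ‖q‖ < 1) (m : ℕ) : qFac q m ≠ 0 :=
  Finset.prod_ne_zero_iff.mpr fun k _ => one_sub_pow_ne_zero hq k

lemma qPochInf_self_ne_zero {q : ℂ} (hq : ‖q‖ < 1) : qPochInf q q ≠ 0 := by
  have := tprod_one_add_ne_zero_of_summable (f := fun k : ℕ => -(q * q ^ k))
    (fun k => by
      have := one_sub_pow_ne_zero hq k
      rwa [pow_succ', sub_eq_add_neg] at this)
    (summable_norm_qPoch hq q)
  simpa only [qPochInf, sub_eq_add_neg] using this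

/-- The ratio of consecutive terms is `r ^ n * s`, which tends to `0`. -/
lemma summable_half_theta {r : ℝ} (hr0 : 0 < r) (hr : r < 1) {s : ℝ} (hs : 0 < s) :
    Summable fun n : ℕ => s ^ n * r ^ (n.choose 2) := by
  refine summable_of_ratio_test_tendsto_lt_one (l := 0) one_pos
    (Eventually.of_forall fun n => by positivity) ?_
  have h : Tendsto (fun n : ℕ => r ^ n * s) atTop (𝓝 0) := by
    simpa using (tendsto_pow_atTop_nhds_zero_of_lt_one hr0.le hr).mul_const s
  refine h.congr fun n => ?_
  rw [choose_two_succ, pow_add r, pow_succ s,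
    Real.norm_of_nonneg (by positivity), Real.norm_of_nonneg (by positivity)]
  field_simp

lemma summable_norm_thetaTerm {q z : ℂ} (hq : ‖q‖ < 1) (hq0 : q ≠ 0) (hz : z ≠ 0) :
    Summable fun n : ℤ => ‖thetaTerm z q n‖ := by
  have hq' := norm_pos_iff.mpr hq0
  have hz' := norm_pos_iff.mpr hz
  refine Summable.of_nat_of_neg ?_ ?_
  · refine (summable_half_theta hq' hq hz').congr fun n => ?_
    have : triExp n = (n.choose 2 : ℕ) := triExp_eq_of_two_mul (two_mul_choose_two n)
    simp [thetaTerm, this]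
  · refine (summable_half_theta hq' hq (s := ‖q‖ / ‖z‖) (by positivity)).congr fun n => ?_
    have : triExp (-n) = (n + n.choose 2 : ℕ) := by
      apply triExp_eq_of_two_mul
      have := two_mul_choose_two n
      push_cast
      linear_combination this
    rw [thetaTerm, this, zpow_natCast, zpow_neg, zpow_natCast, norm_mul, norm_inv, norm_pow,
      norm_pow, norm_neg, pow_add, div_pow]
    field_simp

/-- The weight of `thetaTerm z q n` in the `N`-th finite triple product, extended by `0` outside
`-N ≤ n ≤ N`. -/
noncomputable def centralBin (q : ℂ) (N : ℕ) (n : ℤ) : ℂ :=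
  if n ∈ Finset.Icc (-(N : ℤ)) N then
    qFac q (2 * N) * ((qFac q (N + n).toNat)⁻¹ * (qFac q (N - n).toNat)⁻¹) else 0

lemma finite_triple_product_tsum {q z : ℂ} (hq : ‖q‖ < 1) (hq0 : q ≠ 0) (hz : z ≠ 0) (N : ℕ) :
    (∏ k ∈ Finset.range N, (1 - z * q ^ k)) * ∏ k ∈ Finset.range N, (1 - q / z * q ^ k) =
      ∑' n : ℤ, centralBin q N n * thetaTerm z q n := by
  rw [finite_triple_product hq0 hz,
    tsum_eq_sum (s := (Finset.range (2 * N + 1)).image fun k : ℕ => (k : ℤ) - N)]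
  · rw [Finset.sum_image fun a _ b _ h => by simpa using h]
    refine Finset.sum_congr rfl fun k hk => ?_
    have hk := Finset.mem_range.mp hk
    congr 1
    rw [centralBin, if_pos (Finset.mem_Icc.mpr ⟨by omega, by omega⟩),
      show ((N : ℤ) + (k - N)).toNat = k by omega,
      show ((N : ℤ) - (k - N)).toNat = 2 * N - k by omega,
      ← gaussBin_mul_qFac q (2 * N) k (2 * N - k) (by omega)]
    have := qFac_ne_zero hq k
    have := qFac_ne_zero hq (2 * N - k)
    field_simp
  · intro n hn
    rw [centralBin, if_neg, zero_mul]
    intro h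
    rw [Finset.mem_Icc] at h
    exact hn (Finset.mem_image.mpr
      ⟨(n + N).toNat, Finset.mem_range.mpr (by omega), by omega⟩)

lemma tendsto_centralBin {q : ℂ} (hq : ‖q‖ < 1) (n : ℤ) :
    Tendsto (fun N => centralBin q N n) atTop (𝓝 (qPochInf q q)⁻¹) := by
  have hL := qPochInf_self_ne_zero hq
  have h0 : Tendsto (fun N : ℕ => 2 * N) atTop atTop :=
    tendsto_atTop_atTop.mpr fun b => ⟨b, fun a ha => by omega⟩
  have h1 : Tendsto (fun N : ℕ => ((N : ℤ) + n).toNat) atTop atTop :=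
    tendsto_atTop_atTop.mpr fun b => ⟨b + n.natAbs, fun a ha => by omega⟩
  have h2 : Tendsto (fun N : ℕ => ((N : ℤ) - n).toNat) atTop atTop :=
    tendsto_atTop_atTop.mpr fun b => ⟨b + n.natAbs, fun a ha => by omega⟩
  have h := ((tendsto_qFac hq).comp h0).mul
    ((((tendsto_qFac hq).comp h1).inv₀ hL).mul (((tendsto_qFac hq).comp h2).inv₀ hL))
  rw [mul_inv_cancel_left₀ hL] at h
  refine h.congr' ?_
  filter_upwards [eventually_ge_atTop n.natAbs] with N hN
  rw [centralBin, if_pos (Finset.mem_Icc.mpr ⟨by omega, by omega⟩)]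
  rfl

lemma exists_bound_centralBin {q : ℂ} (hq : ‖q‖ < 1) :
    ∃ C : ℝ, ∀ N n, ‖centralBin q N n‖ ≤ C := by
  obtain ⟨A, hA⟩ := (Metric.isBounded_range_of_tendsto _ (tendsto_qFac hq)).exists_norm_le
  obtain ⟨B, hB⟩ := (Metric.isBounded_range_of_tendsto _
    ((tendsto_qFac hq).inv₀ (qPochInf_self_ne_zero hq))).exists_norm_le
  have hA' (m : ℕ) : ‖qFac q m‖ ≤ A := hA _ ⟨m, rfl⟩
  have hB' (m : ℕ) : ‖(qFac q m)⁻¹‖ ≤ B := hB _ ⟨m, rfl⟩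
  have hA0 : 0 ≤ A := (norm_nonneg _).trans (hA' 0)
  have hB0 : 0 ≤ B := (norm_nonneg _).trans (hB' 0)
  refine ⟨A * (B * B), fun N n => ?_⟩
  rw [centralBin]
  split_ifs
  · rw [norm_mul, norm_mul]
    gcongr
    exacts [hA' _, hB' _, hB' _]
  · rw [norm_zero]
    positivity

/-- The Jacobi triple product `j(z;q) = ∑_{n ∈ ℤ} (-1)^n q^{n(n-1)/2} z^n`. -/
lemma hasSum_thetaTerm {q z : ℂ} (hq : ‖q‖ < 1) (hq0 : q ≠ 0) (hz : z ≠ 0) :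
    HasSum (thetaTerm z q) (qPochInf z q * qPochInf (q / z) q * qPochInf q q) := by
  have hS := summable_norm_thetaTerm hq hq0 hz
  obtain ⟨C, hC⟩ := exists_bound_centralBin hq
  have h := tendsto_tsum_of_dominated_convergence (hS.mul_left C)
    (fun n => (tendsto_centralBin hq n).mul_const (thetaTerm z q n))
    (Eventually.of_forall fun N n => by
      rw [norm_mul]
      exact mul_le_mul_of_nonneg_right (hC N n) (norm_nonneg _))
  simp only [← finite_triple_product_tsum hq hq0 hz] at h
  have h' := tendsto_nhds_unique h ((tendsto_qPoch hq z).mul (tendsto_qPoch hq (q / z)))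
  rw [tsum_mul_left] at h'
  rw [← h', mul_right_comm, inv_mul_cancel₀ (qPochInf_self_ne_zero hq), one_mul]
  exact hS.of_norm.hasSum

/-! ### The dissection -/

lemma hasSum_Jba {q : ℂ} (hq : ‖q‖ < 1) (hq0 : q ≠ 0) {a b : ℕ} (hab : a ≤ b) (hb : b ≠ 0) :
    HasSum (thetaTerm (q ^ a) (q ^ b)) (Jba b a q) := by
  have h := hasSum_thetaTerm (q := q ^ b) (z := q ^ a)
    (by rw [norm_pow]; exact pow_lt_one₀ (norm_nonneg q) hq hb)
    (pow_ne_zero _ hq0) (pow_ne_zero _ hq0)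
  rwa [div_eq_mul_inv, ← pow_sub₀ q hq0 hab] at h

lemma qPochInf_one (q : ℂ) : qPochInf 1 q = 0 :=
  tprod_of_exists_eq_zero ⟨0, by simp⟩

lemma qPochInf_eq {q : ℂ} (hq : ‖q‖ < 1) (a : ℂ) :
    qPochInf a q = (1 - a) * qPochInf (a * q) q := by
  have h1 := (tendsto_qPoch hq a).comp (tendsto_add_atTop_nat 1)
  have h2 := (tendsto_qPoch hq (a * q)).const_mul (1 - a)
  refine tendsto_nhds_unique h1 (h2.congr fun N => ?_)
  simp only [Function.comp_apply]
  rw [Finset.prod_range_succ', pow_zero, mul_one, mul_comm]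
  congr 1
  exact Finset.prod_congr rfl fun k _ => by ring

/-- The terms of the theta series at a fifth root of unity with `n = 5m + r` form, up to a
constant, a theta series with nome `q ^ 25`. -/
lemma thetaTerm_five {q w : ℂ} (hq0 : q ≠ 0) (hw : w ^ 5 = 1) (m r e : ℤ) (a : ℕ)
    (ha : (a : ℤ) = 10 + 5 * r) (he : 2 * e = r * (r - 1)) :
    thetaTerm w q (5 * m + r) = (-w) ^ r * q ^ e * thetaTerm (q ^ a) (q ^ 25) m := by
  have hw0 : w ≠ 0 := by
    rintro rfl
    simp at hw
  have hE : triExp (5 * m + r) = e + a * m + 25 * triExp m := by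
    apply triExp_eq_of_two_mul
    linear_combination he + 25 * two_mul_triExp m + 2 * m * ha
  have h5 : (-w) ^ (5 * m) = (-1) ^ m := by
    rw [zpow_mul]
    congr 1
    have : (-w) ^ (5 : ℤ) = -w ^ 5 := by
      norm_cast
      ring
    rw [this, hw]
  rw [thetaTerm, thetaTerm, hE, zpow_add₀ (neg_ne_zero.mpr hw0), h5, zpow_add₀ hq0,
    zpow_add₀ hq0, zpow_mul q a, zpow_mul q 25, neg_eq_neg_one_mul (q ^ a), mul_zpow]
  norm_cast
  ring

/-- The 5-dissection of `j(w;q)` for `w ^ 5 = 1`, that is, before division by `1 - w`. -/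
lemma theta_dissection {q w : ℂ} (hq : ‖q‖ < 1) (hq0 : q ≠ 0) (hw : w ^ 5 = 1) :
    qPochInf w q * qPochInf (q / w) q * qPochInf q q =
      (1 - w) * Jba 25 10 q + q * (w ^ 2 - w⁻¹) * Jba 25 5 q := by
  have hw0 : w ≠ 0 := by
    rintro rfl
    simp at hw
  have hT := hasSum_thetaTerm hq hq0 hw0
  -- The residues `n ≡ -1, 0, 1, 2, 3` modulo `5` are used, so that all exponents `10 + 5r` lie
  -- between `5` and `25`.
  have hT' := ((Int.divModEquiv 5).symm.trans (Equiv.subRight (1 : ℤ))).hasSum_iff.mpr hT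
  have h1 := hT'.prod_fiberwise fun m => hasSum_fintype _
  have h15 : Jba 25 15 q = Jba 25 10 q := by
    simp only [Jba]
    ring
  have h20 : Jba 25 20 q = Jba 25 5 q := by
    simp only [Jba]
    ring
  have h25 : Jba 25 25 q = 0 := by
    simp [Jba, qPochInf_one]
  have g5 := hasSum_Jba hq hq0 (a := 5) (b := 25) (by norm_num) (by norm_num)
  have g10 := hasSum_Jba hq hq0 (a := 10) (b := 25) (by norm_num) (by norm_num)
  have g15 := hasSum_Jba hq hq0 (a := 15) (b := 25) (by norm_num) (by norm_num)
  have g20 := hasSum_Jba hq hq0 (a := 20) (b := 25) (by norm_num) (by norm_num)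
  have g25 := hasSum_Jba hq hq0 (a := 25) (b := 25) (by norm_num) (by norm_num)
  have h2 := ((((g5.mul_left ((-w) ^ (-1 : ℤ) * q ^ (1 : ℤ))).add
    (g10.mul_left ((-w) ^ (0 : ℤ) * q ^ (0 : ℤ)))).add
    (g15.mul_left ((-w) ^ (1 : ℤ) * q ^ (0 : ℤ)))).add
    (g20.mul_left ((-w) ^ (2 : ℤ) * q ^ (1 : ℤ)))).add
    (g25.mul_left ((-w) ^ (3 : ℤ) * q ^ (3 : ℤ)))
  have h3 := h2.tsum_eq
  rw [h15, h20, h25] at h3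
  rw [← h1.tsum_eq]
  refine (tsum_congr fun m => ?_).trans (h3.trans ?_)
  · have e1 : m * 5 - 1 = 5 * m + -1 := by ring
    have e2 : m * 5 = 5 * m + 0 := by ring
    have e3 : m * 5 + 2 - 1 = 5 * m + 1 := by ring
    have e4 : m * 5 + 3 - 1 = 5 * m + 2 := by ring
    have e5 : m * 5 + 4 - 1 = 5 * m + 3 := by ring
    rw [← thetaTerm_five hq0 hw m (-1) 1 5 (by norm_num) (by norm_num),
      ← thetaTerm_five hq0 hw m 0 0 10 (by norm_num) (by norm_num),
      ← thetaTerm_five hq0 hw m 1 0 15 (by norm_num) (by norm_num),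
      ← thetaTerm_five hq0 hw m 2 1 20 (by norm_num) (by norm_num),
      ← thetaTerm_five hq0 hw m 3 3 25 (by norm_num) (by norm_num),
      ← e1, ← e2, ← e3, ← e4, ← e5]
    simp only [Fin.sum_univ_five, Function.comp_apply, Equiv.trans_apply, Int.divModEquiv,
      Equiv.coe_fn_symm_mk, Equiv.subRight_apply]
    norm_num
  · simp only [zpow_neg, zpow_one, zpow_zero, inv_neg]
    norm_cast
    ring

theorem five_dissection_theta_product (q : ℂ) (hq : ‖q‖ < 1) :
    qPochInf (Complex.exp (2 * Real.pi * Complex.I / 5) * q) q *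
        qPochInf ((Complex.exp (2 * Real.pi * Complex.I / 5))⁻¹ * q) q * qPochInf q q =
      Jba 25 10 q +
        q * ((Complex.exp (2 * Real.pi * Complex.I / 5)) ^ 2 +
          (Complex.exp (2 * Real.pi * Complex.I / 5)) ^ (-2 : ℤ)) * Jba 25 5 q := by
  have hprim := Complex.isPrimitiveRoot_exp 5 (by norm_num)
  push_cast at hprim
  set w := Complex.exp (2 * Real.pi * Complex.I / 5)
  rcases eq_or_ne q 0 with rfl | hq0
  · simp [Jba, qPochInf]
  have hw : w ^ 5 = 1 := hprim.pow_eq_one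
  have hw0 : w ≠ 0 := hprim.ne_zero (by norm_num)
  have hw1 : 1 - w ≠ 0 := sub_ne_zero.mpr (hprim.ne_one (by norm_num)).symm
  have h := theta_dissection hq hq0 hw
  rw [qPochInf_eq hq w, div_eq_inv_mul] at h
  have hi : w⁻¹ = w ^ 4 := inv_eq_of_mul_eq_one_right (by rw [← hw]; ring)
  have hz : w ^ (-2 : ℤ) = w ^ 3 := by
    rw [zpow_neg]
    exact inv_eq_of_mul_eq_one_right (by rw [← hw]; norm_cast; ring)
  apply mul_left_cancel₀ hw1
  rw [hz]
  rw [hi] at h ⊢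
  linear_combination h
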